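/- arXiv:2409.14994 — 2 statements merged into one kernel-verified Lean document; each statement's English description precedes it below -/
import Mathlib

section
/- For every m ∈ ℂ and every r > 0, the Wronskian of the hyperbolic 1d Bessel functions 𝓘_m and 𝓘_{−m} satisfies W(𝓘_m, 𝓘_{−m})(r) = 𝓘_m(r)·𝓘_{−m}'(r) − 𝓘_m'(r)·𝓘_{−m}(r) = −sin(πm). -/
open Complex

/-- Olver-normalized hypergeometric function `₀𝐅₁(c; w) = ∑ wⁿ/(n! Γ(c+n))`. -/
noncomputable def zeroF1reg (c w : ℂ) : ℂ :=
  ∑' n : ℕ, w ^ n / ((n.factorial : ℂ) * Complex.Gamma (c + n))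

/-- Hyperbolic 1d Bessel function `𝓘_m(z) = √π (z/2)^{1/2+m} ₀𝐅₁(m+1; z²/4)`
(principal branch powers). -/
noncomputable def besselI1d (m z : ℂ) : ℂ :=
  (Real.sqrt Real.pi : ℂ) * (z / 2) ^ ((1 : ℂ) / 2 + m) * zeroF1reg (m + 1) (z ^ 2 / 4)

lemma aux_bdd (c : ℂ) : ∃ C : ℝ, ∀ n : ℕ, ‖(Complex.Gamma (c + n))⁻¹‖ ≤ C := by
  obtain ⟨N, hN⟩ := exists_nat_ge (‖c‖ + 1)
  obtain ⟨C, hC⟩ := ((Set.finite_le_nat N).image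
    (fun n : ℕ => ‖(Complex.Gamma (c + n))⁻¹‖)).bddAbove
  have h0 : ∀ n ≤ N, ‖(Complex.Gamma (c + n))⁻¹‖ ≤ C := fun n hn =>
    hC ⟨n, hn, rfl⟩
  refine ⟨C, fun n => ?_⟩
  induction n with
  | zero => exact h0 0 (Nat.zero_le _)
  | succ k ih =>
    by_cases hk : k + 1 ≤ N
    · exact h0 _ hk
    · have hk' : (N : ℝ) ≤ k := by exact_mod_cast (by omega : N ≤ k)
      have h1 : 1 ≤ ‖c + k‖ := by
        have := norm_sub_norm_le (k : ℂ) (-c)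
        rw [norm_neg, Complex.norm_natCast, sub_neg_eq_add, add_comm (k : ℂ)] at this
        linarith
      have h2 := Complex.one_div_Gamma_eq_self_mul_one_div_Gamma_add_one (c + k)
      rw [h2, norm_mul] at ih
      push_cast
      rw [← add_assoc]
      have := norm_nonneg (Complex.Gamma (c + k + 1))⁻¹
      nlinarith

lemma aux_summable (c w : ℂ) :
    Summable fun n : ℕ => w ^ n / ((n.factorial : ℂ) * Complex.Gamma (c + n)) := by
  obtain ⟨C, hC⟩ := aux_bdd c
  refine Summable.of_norm_bounded
    ((Real.summable_pow_div_factorial ‖w‖).mul_right C) (fun n => ?_)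
  have : w ^ n / ((n.factorial : ℂ) * Complex.Gamma (c + n)) =
    w ^ n / (n.factorial : ℂ) * (Complex.Gamma (c + n))⁻¹ := by
    rw [← div_div, div_eq_mul_inv _ (Complex.Gamma _)]
  rw [this, norm_mul, norm_div, norm_pow, Complex.norm_natCast]
  exact mul_le_mul_of_nonneg_left (hC n) (by positivity)

lemma aux_shift (c y : ℂ) (n : ℕ) :
    (((n + 1 : ℕ) : ℂ) * y ^ (n + 1 - 1)) /
      (((n + 1).factorial : ℂ) * Complex.Gamma (c + (n + 1 : ℕ))) =
    y ^ n / ((n.factorial : ℂ) * Complex.Gamma (c + 1 + n)) := by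
  have h : ((n + 1 : ℕ) : ℂ) ≠ 0 := by exact_mod_cast n.succ_ne_zero
  have e : c + ((n + 1 : ℕ) : ℂ) = c + 1 + n := by push_cast; ring
  rw [Nat.factorial_succ, e, Nat.cast_mul, mul_assoc, mul_div_mul_left _ _ h]
  simp

lemma aux_deriv (c w : ℂ) : HasDerivAt (zeroF1reg c) (zeroF1reg (c + 1) w) w := by
  obtain ⟨C, hC⟩ := aux_bdd (c + 1)
  set R : ℝ := ‖w‖ + 1 with hR
  have hw : w ∈ Metric.ball (0 : ℂ) R := by simp [hR]
  let g' : ℕ → ℂ → ℂ := fun n y => ((n : ℂ) * y ^ (n - 1)) /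
      ((n.factorial : ℂ) * Complex.Gamma (c + n))
  let u : ℕ → ℝ := fun n => Nat.casesOn n 0 (fun k => R ^ k / k.factorial * C)
  have hu : Summable u := by
    rw [← summable_nat_add_iff 1]
    exact (Real.summable_pow_div_factorial R).mul_right C
  have hb : ∀ n y, y ∈ Metric.ball (0 : ℂ) R → ‖g' n y‖ ≤ u n := by
    intro n y hy
    have hy' : ‖y‖ ≤ R := by simpa using (Metric.mem_ball.1 hy).le
    cases n with
    | zero => simp [g', u]
    | succ k =>
      simp only [g', u]
      rw [aux_shift, ← div_div, div_eq_mul_inv _ (Complex.Gamma _), norm_mul, norm_div, norm_pow,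
        Complex.norm_natCast]
      have := hC k
      gcongr
  have key := hasDerivAt_tsum_of_isPreconnected (𝕜 := ℂ) hu Metric.isOpen_ball
    (convex_ball (0 : ℂ) R).isPreconnected
    (g := fun (n : ℕ) (y : ℂ) => y ^ n / ((n.factorial : ℂ) * Complex.Gamma (c + n))) (g' := g')
    (fun n y _ => (hasDerivAt_pow n y).div_const _) hb hw (aux_summable c w) hw
  have e : ∑' n, g' n w = zeroF1reg (c + 1) w := by
    rw [Summable.tsum_eq_zero_add (Summable.of_norm_bounded hu (fun n => hb n w hw))]
    simp only [g', aux_shift, zeroF1reg]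
    simp
  rw [← e]
  exact key

lemma aux_rec (c w : ℂ) :
    zeroF1reg c w = c * zeroF1reg (c + 1) w + w * zeroF1reg (c + 2) w := by
  have hs := aux_summable (c + 1) w
  have hn : Summable fun n : ℕ => (n : ℂ) * (w ^ n /
      ((n.factorial : ℂ) * Complex.Gamma (c + 1 + n))) := by
    rw [← summable_nat_add_iff 1]
    refine ((aux_summable (c + 2) w).mul_left w).congr (fun n => ?_)
    have := aux_shift (c + 1) w n
    rw [show c + 2 = c + 1 + 1 by ring, ← this]
    simp only [Nat.add_sub_cancel]
    ring
  have h2 : w * zeroF1reg (c + 2) w = ∑' n : ℕ, (n : ℂ) * (w ^ n /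
      ((n.factorial : ℂ) * Complex.Gamma (c + 1 + n))) := by
    rw [Summable.tsum_eq_zero_add hn, zeroF1reg, ← tsum_mul_left]
    simp only [Nat.cast_zero, zero_mul, zero_add]
    refine tsum_congr (fun n => ?_)
    have := aux_shift (c + 1) w n
    rw [show c + 2 = c + 1 + 1 by ring, ← this]
    simp only [Nat.add_sub_cancel]
    ring
  rw [h2, zeroF1reg, zeroF1reg, ← tsum_mul_left, ← (hs.mul_left c).tsum_add hn]
  refine tsum_congr (fun n => ?_)
  have h := Complex.one_div_Gamma_eq_self_mul_one_div_Gamma_add_one (c + n)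
  rw [div_eq_mul_inv, mul_inv, h, show c + 1 + (n : ℂ) = c + n + 1 by ring, div_eq_mul_inv, mul_inv]
  ring

lemma aux_zero (c : ℂ) : zeroF1reg c 0 = (Complex.Gamma c)⁻¹ := by
  rw [zeroF1reg, tsum_eq_single 0]
  · simp
  · intro n hn; simp [hn]

lemma aux_const (m w : ℂ) :
    w * zeroF1reg (m + 1) w * zeroF1reg (2 - m) w - zeroF1reg m w * zeroF1reg (1 - m) w
      = -Complex.sin (Real.pi * m) / Real.pi := by
  let G : ℂ → ℂ := fun w =>
    w * zeroF1reg (m + 1) w * zeroF1reg (2 - m) w - zeroF1reg m w * zeroF1reg (1 - m) w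
  have hG : ∀ x, HasDerivAt G 0 x := by
    intro x
    have h := (((hasDerivAt_id x).mul (aux_deriv (m + 1) x)).mul (aux_deriv (2 - m) x)).sub
      ((aux_deriv m x).mul (aux_deriv (1 - m) x))
    refine h.congr_deriv ?_
    have r1 := aux_rec m x
    have r2 := aux_rec (1 - m) x
    rw [show 1 - m + 1 = 2 - m by ring, show 1 - m + 2 = 2 - m + 1 by ring] at r2
    rw [show 1 - m + 1 = 2 - m by ring, show m + 1 + 1 = m + 2 by ring]
    simp only [id, Pi.mul_apply]
    rw [r1, r2]
    ring
  have h := is_const_of_deriv_eq_zero (fun x => (hG x).differentiableAt)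
    (fun x => (hG x).deriv) w 0
  simp only [G] at h
  rw [h, zero_mul, zero_mul, zero_sub, aux_zero, aux_zero, ← mul_inv,
    Complex.Gamma_mul_Gamma_one_sub, inv_div, neg_div]

lemma aux_bessel_deriv (m : ℂ) (r : ℝ) (hr : 0 < r) :
    HasDerivAt (fun r : ℝ => besselI1d m r)
      ((Real.sqrt Real.pi : ℂ) * (((1 : ℂ) / 2 + m) * ((r : ℂ) / 2) ^ ((1 : ℂ) / 2 + m) / r *
        zeroF1reg (m + 1) ((r : ℂ) ^ 2 / 4) + ((r : ℂ) / 2) ^ ((1 : ℂ) / 2 + m) *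
        (zeroF1reg (m + 2) ((r : ℂ) ^ 2 / 4) * (r / 2)))) r := by
  have hr0 : (r : ℂ) ≠ 0 := by exact_mod_cast hr.ne'
  have hr2 : (r : ℂ) / 2 ≠ 0 := div_ne_zero hr0 two_ne_zero
  have hsl : (r : ℂ) / 2 ∈ Complex.slitPlane := by
    left
    rw [show (r : ℂ) / 2 = ((r / 2 : ℝ) : ℂ) by push_cast; rfl, Complex.ofReal_re]
    positivity
  have hp : HasDerivAt (fun z : ℂ => (z / 2) ^ ((1 : ℂ) / 2 + m))
      (((1 : ℂ) / 2 + m) * ((r : ℂ) / 2) ^ ((1 : ℂ) / 2 + m - 1) * (1 / 2)) (r : ℂ) :=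
    ((hasDerivAt_id (r : ℂ)).div_const 2).cpow_const hsl
  have hq : HasDerivAt (fun z : ℂ => z ^ 2 / 4) ((r : ℂ) / 2) (r : ℂ) :=
    ((hasDerivAt_pow 2 (r : ℂ)).div_const 4).congr_deriv (by norm_num; ring)
  have hF := (aux_deriv (m + 1) ((r : ℂ) ^ 2 / 4)).comp (r : ℂ) hq
  have hz : HasDerivAt (besselI1d m) _ (r : ℂ) := (hp.const_mul (Real.sqrt Real.pi : ℂ)).mul hF
  refine hz.comp_ofReal.congr_deriv ?_
  rw [Complex.cpow_sub _ _ hr2, Complex.cpow_one, show m + 1 + 1 = m + 2 by ring]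
  field_simp

/-- for every `m ∈ ℂ` and `r > 0`,
`W(𝓘_m, 𝓘_{-m})(r) = 𝓘_m(r) 𝓘_{-m}'(r) - 𝓘_m'(r) 𝓘_{-m}(r) = -sin(π m)`. -/
theorem wronskian_besselI1d (m : ℂ) :
    ∀ r : ℝ, 0 < r →
      besselI1d m r * deriv (fun r : ℝ => besselI1d (-m) r) r -
        deriv (fun r : ℝ => besselI1d m r) r * besselI1d (-m) r =
      -Complex.sin (Real.pi * m) := by
  intro r hr
  rw [(aux_bessel_deriv m r hr).deriv, (aux_bessel_deriv (-m) r hr).deriv]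
  have hr0 : (r : ℂ) ≠ 0 := by exact_mod_cast hr.ne'
  have hr2 : (r : ℂ) / 2 ≠ 0 := div_ne_zero hr0 two_ne_zero
  have hpi : (Real.pi : ℂ) ≠ 0 := by exact_mod_cast Real.pi_ne_zero
  have hs : (Real.sqrt Real.pi : ℂ) * (Real.sqrt Real.pi : ℂ) = Real.pi := by
    rw [← Complex.ofReal_mul, Real.mul_self_sqrt Real.pi_pos.le]
  have hP : ((r : ℂ) / 2) ^ ((1 : ℂ) / 2 + m) * ((r : ℂ) / 2) ^ ((1 : ℂ) / 2 + -m) = r / 2 := by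
    rw [← Complex.cpow_add _ _ hr2, show (1 : ℂ) / 2 + m + (1 / 2 + -m) = 1 by ring,
      Complex.cpow_one]
  have hc := aux_const m ((r : ℂ) ^ 2 / 4)
  rw [aux_rec m] at hc
  rw [eq_div_iff hpi] at hc
  rw [← hc]
  simp only [besselI1d]
  rw [show -m + 1 = 1 - m by ring, show -m + 2 = 2 - m by ring]
  generalize ((r : ℂ) / 2) ^ ((1 : ℂ) / 2 + m) = P at *
  generalize ((r : ℂ) / 2) ^ ((1 : ℂ) / 2 + -m) = Q at *
  generalize zeroF1reg (m + 1) ((r : ℂ) ^ 2 / 4) = A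
  generalize zeroF1reg (m + 2) ((r : ℂ) ^ 2 / 4) = B
  generalize zeroF1reg (1 - m) ((r : ℂ) ^ 2 / 4) = D
  generalize zeroF1reg (2 - m) ((r : ℂ) ^ 2 / 4) = E
  generalize (Real.sqrt Real.pi : ℂ) = S at *
  rw [← hs]
  have : ∀ X Y : ℂ, X = (S * S) * (P * Q) * Y → P * Q = r / 2 → X = S * S * (r / 2) * Y := by
    intro X Y h1 h2; rw [h1, h2]
  refine (this _ (-2 * m / r * A * D + A * E * (r / 2) - B * D * (r / 2)) (by ring) hP).trans ?_
  field_simp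
  ring
end

section
/- For all β, m ∈ ℂ and all r > 0, the Wronskian of the two 1d Whittaker functions satisfies W(𝓘_{β,m}, 𝓘_{β,−m})(r) = 𝓘_{β,m}(r)·𝓘_{β,−m}'(r) − 𝓘_{β,m}'(r)·𝓘_{β,−m}(r) = −sin(2πm)/π. -/
open Complex

/-- Olver-normalized confluent hypergeometric function
`₁𝐅₁(a; c; w) = ∑ (a)ₙ wⁿ/(n! Γ(c+n))`. -/
noncomputable def oneF1reg (a c w : ℂ) : ℂ :=
  ∑' n : ℕ, (ascPochhammer ℂ n).eval a * w ^ n / ((n.factorial : ℂ) * Complex.Gamma (c + n))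

/-- 1d Whittaker function `𝓘_{β,m}(z) = z^{1/2+m} e^{-z/2} ₁𝐅₁(1/2+m-β; 1+2m; z)`
(principal branch powers). -/
noncomputable def whittI (β m z : ℂ) : ℂ :=
  z ^ ((1 : ℂ) / 2 + m) * Complex.exp (-z / 2) * oneF1reg (1 / 2 + m - β) (1 + 2 * m) z


def KRec (a c : ℂ) (u : ℕ → ℂ) : Prop := ∀ n : ℕ, ((n:ℂ)+1) * (c+n) * u (n+1) = (a+n) * u n

lemma KRec.shift {a c : ℂ} {u : ℕ → ℂ} (h : KRec a c u) :
    KRec (a+1) (c+1) (fun n => ((n:ℂ)+1) * u (n+1)) := by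
  intro n
  have := h (n+1)
  push_cast at this ⊢
  linear_combination ((n:ℂ)+1) * this

lemma KRec.summable {a c : ℂ} {u : ℕ → ℂ} (h : KRec a c u) (z : ℂ) :
    Summable (fun n => u n * z ^ n) := by
  apply summable_of_ratio_norm_eventually_le (r := 1/2) (by norm_num)
  obtain ⟨N, hN⟩ := exists_nat_gt (2 * ‖c‖ + 2 * ‖a‖ + 8 * ‖z‖ + 2)
  filter_upwards [Filter.eventually_ge_atTop N] with n hn
  have hnN : (N:ℝ) ≤ n := by exact_mod_cast hn
  have ha := norm_nonneg a
  have hc := norm_nonneg c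
  have hz := norm_nonneg z
  have h1 : ‖a + n‖ ≤ ‖a‖ + n := by
    simpa using norm_add_le a (n:ℂ)
  have h2 : (n:ℝ) - ‖c‖ ≤ ‖c + n‖ := by
    have := norm_sub_norm_le (n:ℂ) (-c)
    simp only [norm_neg, sub_neg_eq_add, Complex.norm_natCast] at this
    rwa [add_comm c]
  have h3 : ‖(n:ℂ)+1‖ = n + 1 := by
    rw [show (n:ℂ)+1 = ((n+1:ℕ):ℂ) by push_cast; ring, Complex.norm_natCast]; push_cast; ring
  have h4 := congrArg norm (h n)
  rw [norm_mul, norm_mul, norm_mul, h3] at h4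
  have hu := norm_nonneg (u n)
  have hu' := norm_nonneg (u (n+1))
  rw [norm_mul, norm_mul, norm_pow, norm_pow, pow_succ]
  have key : ‖u (n+1)‖ * ‖z‖ ≤ 1/2 * ‖u n‖ := by
    have hpos : (0:ℝ) < (n+1) * ‖c+n‖ := by apply mul_pos <;> linarith
    refine le_of_mul_le_mul_left ?_ hpos
    have e : (n+1) * ‖c+n‖ * (‖u (n+1)‖ * ‖z‖) = (‖a+n‖ * ‖z‖) * ‖u n‖ := by
      linear_combination ‖z‖ * h4
    rw [e]
    have : ‖a+n‖ * ‖z‖ ≤ (n+1) * ‖c+n‖ * (1/2) := by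
      calc ‖a+n‖ * ‖z‖ ≤ (2 * n) * (n/8) := by
            apply mul_le_mul <;> linarith
        _ ≤ (n+1) * (n/2) * (1/2) := by nlinarith
        _ ≤ _ := by
          gcongr
          linarith
    calc _ ≤ (n+1) * ‖c+n‖ * (1/2) * ‖u n‖ := by gcongr
      _ = _ := by ring
  have hp : 0 ≤ ‖z‖^n := by positivity
  nlinarith [mul_le_mul_of_nonneg_right key hp]

noncomputable def KS (u : ℕ → ℂ) (z : ℂ) : ℂ := ∑' n, u n * z ^ n

lemma KRec.mulz {a c : ℂ} {u : ℕ → ℂ} (h : KRec a c u) (z : ℂ) :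
    HasSum (fun n : ℕ => (n:ℂ) * u n * z ^ n) (z * KS (fun n => ((n:ℂ)+1) * u (n+1)) z) := by
  have := (h.shift.summable z).hasSum.mul_left z
  rw [← hasSum_nat_add_iff' 1]
  simp only [Finset.sum_range_one, Nat.cast_zero, zero_mul, sub_zero]
  refine Eq.mp ?_ this
  unfold KS
  congr 1; funext n
  push_cast; ring

lemma KRec.hasDerivAt {a c : ℂ} {u : ℕ → ℂ} (h : KRec a c u) (z : ℂ) :
    HasDerivAt (KS u) (KS (fun n => ((n:ℂ)+1) * u (n+1)) z) z := by
  set R : ℝ := ‖z‖ + 1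
  have hR : 0 < R := by positivity
  have hs : Summable (fun n : ℕ => ‖u n * ((n:ℂ) * (R:ℂ) ^ (n-1))‖) := by
    rw [← summable_nat_add_iff 1]
    have := (h.shift.summable (R:ℂ)).norm
    refine this.congr fun n => ?_
    congr 1
    rw [Nat.add_sub_cancel]; push_cast; ring
  have := hasDerivAt_tsum_of_isPreconnected (g := fun n y => u n * y ^ n)
    (g' := fun n y => u n * ((n:ℂ) * y ^ (n-1))) (t := Metric.ball 0 R) (y₀ := z) (y := z) hs
    Metric.isOpen_ball (convex_ball _ _).isPreconnected
    (fun n y _ => (hasDerivAt_pow n y).const_mul (u n))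
    (fun n y hy => by
      have hy' : ‖y‖ ≤ R := by simpa using (le_of_lt hy : dist y 0 ≤ R)
      simp only [norm_mul, norm_pow, Complex.norm_real, Real.norm_eq_abs, abs_of_pos hR]
      gcongr)
    (by simp [R]) (h.summable z) (by simp [R])
  refine HasDerivAt.congr_deriv this ?_
  unfold KS
  have hs2 : Summable (fun n : ℕ => u n * ((n:ℂ) * z ^ (n-1))) := by
    rw [← summable_nat_add_iff 1]
    refine (h.shift.summable z).congr fun n => ?_
    rw [Nat.add_sub_cancel]; push_cast; ring
  rw [hs2.tsum_eq_zero_add]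
  simp only [Nat.cast_zero, zero_mul, mul_zero, zero_add]
  congr 1; ext n
  rw [Nat.add_sub_cancel]; push_cast; ring

lemma KRec.ode {a c : ℂ} {u : ℕ → ℂ} (h : KRec a c u) (z : ℂ) :
    z * KS (fun n => ((n:ℂ)+1) * ((((n+1:ℕ):ℂ)+1) * u (n+1+1))) z
      + (c - z) * KS (fun n => ((n:ℂ)+1) * u (n+1)) z - a * KS u z = 0 := by
  have h1 := h.shift.mulz z
  have h2 := h.mulz z
  have h3 := (h.shift.summable z).hasSum.mul_left c
  have h4 := (h.summable z).hasSum.mul_left a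
  have h5 := ((h1.add h3).sub h2).sub h4
  have h6 : ∀ n : ℕ, (n:ℂ) * (((n:ℂ)+1) * u (n+1)) * z^n + c * (((n:ℂ)+1) * u (n+1) * z^n)
      - (n:ℂ) * u n * z^n - a * (u n * z^n) = 0 := by
    intro n
    linear_combination z^n * h n
  simp only [h6] at h5
  have := h5.unique hasSum_zero
  rw [← this]
  simp only [KS]
  ring

noncomputable def uu (a c : ℂ) (n : ℕ) : ℂ :=
  (ascPochhammer ℂ n).eval a / ((n.factorial : ℂ) * Complex.Gamma (c + n))

lemma uu_rec (a c : ℂ) : KRec a c (uu a c) := by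
  intro n
  unfold uu
  have h := Complex.one_div_Gamma_eq_self_mul_one_div_Gamma_add_one (c + n)
  rw [ascPochhammer_succ_eval, Nat.factorial_succ]
  push_cast
  rw [← add_assoc c]
  have h1 : (n:ℂ)+1 ≠ 0 := by exact_mod_cast Nat.succ_ne_zero n
  have h2 : (n.factorial:ℂ) ≠ 0 := by exact_mod_cast n.factorial_ne_zero
  simp only [div_eq_mul_inv, mul_inv, one_mul] at h ⊢
  rw [h]
  field_simp

lemma oneF1_eq (a c w : ℂ) : oneF1reg a c w = KS (uu a c) w := by
  unfold oneF1reg KS uu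
  congr 1; ext n; ring

lemma KS_zero (u : ℕ → ℂ) : KS u 0 = u 0 := by
  unfold KS
  rw [tsum_eq_single 0]
  · simp
  · intro n hn; simp [hn]

noncomputable def sh (u : ℕ → ℂ) : ℕ → ℂ := fun n => ((n:ℂ)+1) * u (n+1)

lemma gam (m : ℂ) : -2 * m * ((Complex.Gamma (1 + 2*m))⁻¹ * (Complex.Gamma (1 - 2*m))⁻¹) =
    -Complex.sin (2 * Real.pi * m) / (Real.pi : ℂ) := by
  have h := Complex.one_div_Gamma_eq_self_mul_one_div_Gamma_add_one (2*m)
  have h' := Complex.Gamma_mul_Gamma_one_sub (2*m)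
  have h'' := congrArg (·⁻¹) h'
  simp only [mul_inv, inv_div, one_div] at h h''
  rw [h] at h''
  rw [add_comm 1, show 2 * (Real.pi:ℂ) * m = Real.pi * (2*m) by ring]
  linear_combination - h''

lemma const_H (β m z : ℂ) : Complex.exp (-z) *
    (-2 * m * (KS (uu (1/2+m-β) (1+2*m)) z * KS (uu (1/2-m-β) (1-2*m)) z) +
      z * (KS (uu (1/2+m-β) (1+2*m)) z * KS (sh (uu (1/2-m-β) (1-2*m))) z -
       KS (sh (uu (1/2+m-β) (1+2*m))) z * KS (uu (1/2-m-β) (1-2*m)) z)) =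
    -Complex.sin (2 * Real.pi * m) / (Real.pi : ℂ) := by
  set u := uu (1/2+m-β) (1+2*m) with hu
  set v := uu (1/2-m-β) (1-2*m) with hv
  have ru : KRec _ _ u := uu_rec _ _
  have rv : KRec _ _ v := uu_rec _ _
  have hd : ∀ z, HasDerivAt (fun z => Complex.exp (-z) *
    (-2 * m * (KS u z * KS v z) + z * (KS u z * KS (sh v) z - KS (sh u) z * KS v z))) 0 z := by
    intro z
    have d1 : HasDerivAt (KS u) (KS (sh u) z) z := ru.hasDerivAt z
    have d2 : HasDerivAt (KS v) (KS (sh v) z) z := rv.hasDerivAt z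
    have d3 : HasDerivAt (KS (sh u)) (KS (sh (sh u)) z) z := ru.shift.hasDerivAt z
    have d4 : HasDerivAt (KS (sh v)) (KS (sh (sh v)) z) z := rv.shift.hasDerivAt z
    have o1 : z * KS (sh (sh u)) z + ((1+2*m) - z) * KS (sh u) z - (1/2+m-β) * KS u z = 0 := by
      exact ru.ode z
    have o2 : z * KS (sh (sh v)) z + ((1-2*m) - z) * KS (sh v) z - (1/2-m-β) * KS v z = 0 := by
      exact rv.ode z
    have d := ((hasDerivAt_id z).neg.cexp).mul ((((d1.mul d2).const_mul (-2*m))).add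
      ((hasDerivAt_id z).mul ((d1.mul d4).sub (d3.mul d2))))
    refine d.congr_deriv ?_
    simp only [id, Pi.mul_apply, Pi.add_apply, Pi.sub_apply, Pi.neg_apply]
    linear_combination Complex.exp (-z) * KS u z * o2 - Complex.exp (-z) * KS v z * o1
  have := is_const_of_deriv_eq_zero (fun z => (hd z).differentiableAt) (fun z => (hd z).deriv) z 0
  rw [this, ← gam]
  simp [KS_zero, hu, hv, uu]

lemma whitt_deriv (β m : ℂ) (r : ℝ) (hr : 0 < r) :
    deriv (fun r : ℝ => whittI β m r) r =
      (r:ℂ) ^ ((1 : ℂ) / 2 + m) * Complex.exp (-(r:ℂ) / 2) *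
       (((1/2+m)/r - 1/2) * KS (uu (1/2+m-β) (1+2*m)) r + KS (sh (uu (1/2+m-β) (1+2*m))) r) := by
  have hr0 : (r:ℂ) ≠ 0 := by exact_mod_cast hr.ne'
  have d1 : HasDerivAt (KS (uu (1/2+m-β) (1+2*m))) (KS (sh (uu (1/2+m-β) (1+2*m))) r) (r:ℂ) :=
    (uu_rec _ _).hasDerivAt _
  have d2 := (hasDerivAt_id (r:ℂ)).cpow_const (c := 1/2+m) (Or.inl (by simpa using hr))
  have d3 := ((hasDerivAt_id (r:ℂ)).neg.div_const 2).cexp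
  have d := ((d2.mul d3).mul d1).comp_ofReal
  have e : (fun r : ℝ => whittI β m r) = fun y : ℝ => (y:ℂ) ^ (1/2+m) * Complex.exp (-(y:ℂ)/2) *
      KS (uu (1/2+m-β) (1+2*m)) y := by
    ext y; simp only [whittI, oneF1_eq]
  rw [e]
  refine (HasDerivAt.deriv (f' := _) d).trans ?_
  simp only [id, Pi.mul_apply, Pi.neg_apply]
  rw [Complex.cpow_sub _ _ hr0, Complex.cpow_one]
  field_simp
  ring

theorem wronskian_whittI (β m : ℂ) :
    ∀ r : ℝ, 0 < r →
      whittI β m r * deriv (fun r : ℝ => whittI β (-m) r) r -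
        deriv (fun r : ℝ => whittI β m r) r * whittI β (-m) r =
      -Complex.sin (2 * Real.pi * m) / (Real.pi : ℂ) := by
  intro r hr
  have hr0 : (r:ℂ) ≠ 0 := by exact_mod_cast hr.ne'
  rw [whitt_deriv _ _ _ hr, whitt_deriv _ _ _ hr, ← const_H β m r]
  simp only [whittI, oneF1_eq, ← sub_eq_add_neg, mul_neg]
  have e1 : (r:ℂ) ^ ((1:ℂ)/2+m) * (r:ℂ) ^ ((1:ℂ)/2-m) = r := by
    rw [← Complex.cpow_add _ _ hr0]; ring_nf; simp
  have e2 : Complex.exp (-(r:ℂ)) = Complex.exp (-(r:ℂ)/2) * Complex.exp (-(r:ℂ)/2) := by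
    rw [← Complex.exp_add]; ring_nf
  rw [e2]
  generalize KS (uu (1/2+m-β) (1+2*m)) r = F
  generalize KS (uu (1/2-m-β) (1-2*m)) r = G
  generalize KS (sh (uu (1/2+m-β) (1+2*m))) r = F'
  generalize KS (sh (uu (1/2-m-β) (1-2*m))) r = G'
  generalize Complex.exp (-(r:ℂ)/2) = E at *
  generalize (r:ℂ) ^ ((1:ℂ)/2+m) = A at *
  generalize (r:ℂ) ^ ((1:ℂ)/2-m) = B at *
  have : (-2*m*(F*G) + r * (F*G'-F'*G)) = r * (F * (((1/2-m)/r - 1/2) * G + G') - (((1/2+m)/r - 1/2) * F + F') * G) := by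
    field_simp
    ring
  rw [this]
  linear_combination (E*E*(F * (((1/2-m)/r - 1/2) * G + G') - (((1/2+m)/r - 1/2) * F + F') * G)) * e1
end
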